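/- For every integer k₀ with 1 ≤ |k₀| ≤ 10^6 and every n ≥ 1, the integer δ_n(k₀) is not a square in ℤ. -/

import Mathlib

/-!
The ratios `r n = δ n / ε n` satisfy `r (n + 1) = k * (r n + (r n)⁻¹)`, and `δ (n + 1)` is a square
exactly when `r n ^ 2 + 1` is one. Write `r (2 * m + 1) = k * (c m / d m)`, where `c 0 = 2`,
`d 0 = 1` and `c (m + 1)`, `d (m + 1)` are polynomials in `c m`, `d m` and `k ^ 2`. Up to even
powers of `k`, `δ (2 * m + 1)` is `c m` and `δ (2 * m + 2)` is `(k * c m) ^ 2 + d m ^ 2`.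

* Modulo `3` one has `c m = 2` whatever `k` is, so no `δ (2 * m + 1)` is a square.
* `δ 2 = k ^ 2 * ((2 * k) ^ 2 + 1)` is not a square.
* For the remaining `δ (2 * m + 2)`, the ratio `c m / d m` modulo a prime `p` runs through the orbit
  of `2` under a self-map of `ZMod p` that depends only on `k ^ 2`. This orbit is eventually
  periodic, so finitely many tests can show that `(k * c m) ^ 2 + d m ^ 2` is a nonresidue modulo
  `p` for all `m ≥ 1`. Sieving with `71` primes finds such a `p` for each `k` up to `10 ^ 6`.
-/

namespace DeltaEpsilon

section Recurrence

variable {R : Type*} [CommRing R]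

/-- The values `D n = δ_n(k)` and `E n = ε_n(k)` for `n ≥ 1`, in an arbitrary commutative ring;
`D 0` and `E 0` are unconstrained. -/
structure IsDeltaEpsilon (k : R) (D E : ℕ → R) : Prop where
  delta_one : D 1 = 2 * k ^ 2
  epsilon_one : E 1 = k
  delta_succ : ∀ n, 1 ≤ n → D (n + 1) = D n ^ 2 + E n ^ 2
  mul_epsilon_succ : ∀ n, 1 ≤ n → k * E (n + 1) = D n * E n

mutual

/-- The numerator `c m` of `δ_{2m+1}(k) / (k * ε_{2m+1}(k))` after removal of the powers of `k`,
where `q = k ^ 2`. -/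
def oddNum (q : R) : ℕ → R
  | 0 => 2
  | m + 1 => (q * oddNum q m ^ 2 + oddDen q m ^ 2) ^ 2 + (oddNum q m * oddDen q m) ^ 2

/-- The denominator `d m` that goes with `oddNum`. -/
def oddDen (q : R) : ℕ → R
  | 0 => 1
  | m + 1 => (q * oddNum q m ^ 2 + oddDen q m ^ 2) * (oddNum q m * oddDen q m)

end

/-- The numerator `q * c m ^ 2 + d m ^ 2` of `δ_{2m+2}(k) / ε_{2m+2}(k)` after removal of the powers
of `k`, where `q = k ^ 2`. -/
def evenNum (q : R) (m : ℕ) : R := q * oddNum q m ^ 2 + oddDen q m ^ 2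

theorem oddNum_succ (q : R) (m : ℕ) :
    oddNum q (m + 1) = evenNum q m ^ 2 + (oddNum q m * oddDen q m) ^ 2 := rfl

theorem oddDen_succ (q : R) (m : ℕ) :
    oddDen q (m + 1) = evenNum q m * (oddNum q m * oddDen q m) := rfl

theorem map_oddNum_and_map_oddDen {S : Type*} [CommRing S] (f : R →+* S) (q : R) (m : ℕ) :
    f (oddNum q m) = oddNum (f q) m ∧ f (oddDen q m) = oddDen (f q) m := by
  induction m with
  | zero => exact ⟨map_ofNat f 2, map_one f⟩
  | succ m ih => simp [oddNum, oddDen, ih]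

theorem map_evenNum {S : Type*} [CommRing S] (f : R →+* S) (q : R) (m : ℕ) :
    f (evenNum q m) = evenNum (f q) m := by
  simp [evenNum, map_oddNum_and_map_oddDen]

namespace IsDeltaEpsilon

variable [IsDomain R] {k : R} {D E : ℕ → R}

theorem even_eq_of_odd_eq (h : IsDeltaEpsilon k D E) (hk : k ≠ 0) {m u : ℕ}
    (hD : D (2 * m + 1) = (k ^ (u + 1)) ^ 2 * oddNum (k ^ 2) m)
    (hE : E (2 * m + 1) = k ^ (2 * u + 1) * oddDen (k ^ 2) m) :
    D (2 * m + 2) = (k ^ (2 * u + 1)) ^ 2 * evenNum (k ^ 2) m ∧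
      E (2 * m + 2) = (k ^ (2 * u + 1)) ^ 2 * (oddNum (k ^ 2) m * oddDen (k ^ 2) m) := by
  constructor
  · rw [h.delta_succ _ (by lia), hD, hE, evenNum]
    ring
  · apply mul_left_cancel₀ hk
    rw [h.mul_epsilon_succ _ (by lia), hD, hE]
    ring

theorem exists_odd_eq (h : IsDeltaEpsilon k D E) (hk : k ≠ 0) (m : ℕ) :
    ∃ u, D (2 * m + 1) = (k ^ (u + 1)) ^ 2 * oddNum (k ^ 2) m ∧
      E (2 * m + 1) = k ^ (2 * u + 1) * oddDen (k ^ 2) m := by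
  induction m with
  | zero => exact ⟨0, by simp [h.delta_one, oddNum, mul_comm], by simp [h.epsilon_one, oddDen]⟩
  | succ m ih =>
    obtain ⟨u, hD, hE⟩ := ih
    obtain ⟨hD', hE'⟩ := h.even_eq_of_odd_eq hk hD hE
    refine ⟨4 * u + 1, ?_, mul_left_cancel₀ hk ?_⟩
    · rw [show 2 * (m + 1) + 1 = 2 * m + 2 + 1 by ring, h.delta_succ _ (by lia), hD', hE',
        oddNum_succ]
      ring
    · rw [show 2 * (m + 1) + 1 = 2 * m + 2 + 1 by ring, h.mul_epsilon_succ _ (by lia), hD', hE',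
        oddDen_succ]
      ring

end IsDeltaEpsilon

end Recurrence

section Squares

theorem isSquare_of_isSquare_sq_mul {R : Type*} [CommRing R] [IsDomain R] [IsIntegrallyClosed R]
    {a b : R} (ha : a ≠ 0) (hab : IsSquare (a ^ 2 * b)) : IsSquare b := by
  obtain ⟨x, hx⟩ := hab.exists_sq
  obtain ⟨y, rfl⟩ : a ∣ x :=
    (IsIntegrallyClosed.pow_dvd_pow_iff two_ne_zero).1 ⟨b, hx.symm⟩
  refine (isSquare_iff_exists_sq b).2 ⟨y, mul_left_cancel₀ (pow_ne_zero 2 ha) ?_⟩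
  rw [hx, mul_pow]

theorem oddNum_sq_zmod_three (k : ZMod 3) (m : ℕ) :
    oddNum (k ^ 2) m = 2 ∧ oddDen (k ^ 2) m ≠ 0 := by
  induction m with
  | zero => exact ⟨rfl, one_ne_zero⟩
  | succ m ih =>
    have step : ∀ k c d : ZMod 3, c = 2 ∧ d ≠ 0 →
        (k ^ 2 * c ^ 2 + d ^ 2) ^ 2 + (c * d) ^ 2 = 2 ∧
          (k ^ 2 * c ^ 2 + d ^ 2) * (c * d) ≠ 0 := by decide
    exact step k _ _ ih

theorem not_isSquare_oddNum (k : ℤ) (m : ℕ) : ¬ IsSquare (oddNum (k ^ 2) m) := by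
  intro hsq
  have hmod : IsSquare (2 : ZMod 3) := by
    have := hsq.map (Int.castRingHom (ZMod 3))
    rwa [(map_oddNum_and_map_oddDen _ _ _).1, map_pow, (oddNum_sq_zmod_three _ m).1] at this
  exact absurd hmod (by decide)

theorem not_isSquare_evenNum_zero {k : ℤ} (hk : k ≠ 0) : ¬ IsSquare (evenNum (k ^ 2) 0) := by
  rintro ⟨x, hx⟩
  have hfactor : (x - 2 * k) * (x + 2 * k) = 1 := by
    simp only [evenNum, oddNum, oddDen] at hx
    linear_combination -hx
  have heq := Int.eq_of_mul_eq_one hfactor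
  lia

end Squares

section Ratio

variable {F : Type*} [Field F]

/-- The self-map `c m / d m ↦ c (m + 1) / d (m + 1)`. With `0⁻¹ = 0` it describes the ratios even
where a denominator vanishes. -/
def ratioStep (q y : F) : F := q * y + y⁻¹ + (q * y + y⁻¹)⁻¹

theorem mul_sq_add_sq_div_mul (q a b : F) :
    (q * a ^ 2 + b ^ 2) / (a * b) = q * (a / b) + (a / b)⁻¹ := by
  rcases eq_or_ne a 0 with rfl | ha
  · simp
  rcases eq_or_ne b 0 with rfl | hb
  · simp
  field_simp

theorem oddNum_div_oddDen_succ (q : F) (m : ℕ) :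
    oddNum q (m + 1) / oddDen q (m + 1) = ratioStep q (oddNum q m / oddDen q m) := by
  have heven := mul_sq_add_sq_div_mul q (oddNum q m) (oddDen q m)
  have hodd := mul_sq_add_sq_div_mul 1 (evenNum q m) (oddNum q m * oddDen q m)
  simp only [one_mul] at hodd
  rw [oddNum_succ, oddDen_succ, hodd, evenNum, heven, ratioStep]

theorem oddNum_div_oddDen (q : F) (m : ℕ) :
    oddNum q m / oddDen q m = (ratioStep q)^[m] 2 := by
  induction m with
  | zero => simp [oddNum, oddDen]
  | succ m ih => rw [oddNum_div_oddDen_succ, ih, Function.iterate_succ_apply']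

theorem not_isSquare_mul_sq_add_sq {q c d : F} (h : ¬ IsSquare (q * (c / d) ^ 2 + 1)) :
    ¬ IsSquare (q * c ^ 2 + d ^ 2) := by
  have hd : d ≠ 0 := by
    rintro rfl
    simp at h
  rintro ⟨x, hx⟩
  refine h ⟨x / d, ?_⟩
  field_simp
  rw [hx, sq]

theorem not_isSquare_evenNum_of_ratioStep {q : F}
    (h : ∀ i, ¬ IsSquare (q * ((ratioStep q)^[i] (ratioStep q 2)) ^ 2 + 1)) (m : ℕ) :
    ¬ IsSquare (evenNum q (m + 1)) := by
  apply not_isSquare_mul_sq_add_sq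
  rw [oddNum_div_oddDen, Function.iterate_succ_apply]
  exact h m

end Ratio

section Orbit

variable {α : Type*} [DecidableEq α] {f : α → α} {P : α → Bool}

/-- Tests `P` along the forward orbit of `x` under `f` until the next point lies in `seen` or has
already been visited; gives up with `false` after `n` points. -/
def orbitAll (f : α → α) (P : α → Bool) : (n : ℕ) → (seen : List α) → (x : α) → Bool
  | 0, _, _ => false
  | n + 1, seen, x => P x && (decide (f x ∈ x :: seen) || orbitAll f P n (x :: seen) (f x))

theorem exists_set_of_orbitAll {n : ℕ} {seen : List α} {x : α}
    (h : orbitAll f P n seen x = true) :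
    ∃ S : Set α, x ∈ S ∧ ∀ y ∈ S, P y = true ∧ (f y ∈ S ∨ f y ∈ seen) := by
  induction n generalizing seen x with
  | zero => simp [orbitAll] at h
  | succ n ih =>
    simp only [orbitAll, Bool.and_eq_true, Bool.or_eq_true, decide_eq_true_eq] at h
    obtain ⟨hP, hrecur | hrest⟩ := h
    · exact ⟨{x}, rfl, by simpa [hP] using hrecur⟩
    · obtain ⟨S, hfx, hS⟩ := ih hrest
      simp only [List.mem_cons] at hS
      refine ⟨insert x S, Set.mem_insert x S, ?_⟩
      rintro y (rfl | hy)
      · exact ⟨hP, Or.inl (Or.inr hfx)⟩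
      · exact ⟨(hS y hy).1, by grind⟩

theorem forall_iterate_of_orbitAll {n : ℕ} {x : α} (h : orbitAll f P n [] x = true) (i : ℕ) :
    P (f^[i] x) = true := by
  obtain ⟨S, hx, hS⟩ := exists_set_of_orbitAll h
  simp only [List.not_mem_nil, or_false] at hS
  have hmaps : Set.MapsTo f S S := fun y hy => (hS y hy).2
  exact (hS _ (hmaps.iterate i hx)).1

end Orbit

section Modular

/-- Euler's criterion for `a` to be a quadratic nonresidue modulo the prime `p`: the power
`a ^ (p / 2)` is neither `0` nor `1` modulo `p`. -/
def isNonresidue (p a : ℕ) : Bool := Nat.blt 1 (a ^ (p / 2) % p)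

/-- The map `y ↦ q * y + y⁻¹` modulo an odd prime `p`, the inverse being the power `p - 2`. -/
def mulAddInvMod (p q y : ℕ) : ℕ := (q * y + y ^ (p - 2)) % p

/-- The map `ratioStep` modulo an odd prime `p`, on natural numbers. -/
def ratioStepMod (p q y : ℕ) : ℕ := mulAddInvMod p 1 (mulAddInvMod p q y)

/-- The test that modulo `p` no `evenNum q (m + 1)` is a square. The orbit is followed for at most
`40` steps, which is enough for the primes in `sievePrimes`. -/
def certifies (p q : ℕ) : Bool :=
  orbitAll (ratioStepMod p q) (fun y => isNonresidue p (q * y ^ 2 + 1)) 40 [] (ratioStepMod p q 2)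

variable {p : ℕ} [Fact p.Prime]

theorem not_isSquare_of_isNonresidue {a : ℕ} (h : isNonresidue p a = true) :
    ¬ IsSquare (a : ZMod p) := by
  have hlt : 1 < a ^ (p / 2) % p := Nat.blt_eq.mp h
  have hp : p.Prime := Fact.out
  have ha : (a : ZMod p) ≠ 0 := by
    rw [Ne, ZMod.natCast_eq_zero_iff]
    intro hdvd
    have hpow : p ∣ a ^ (p / 2) := dvd_pow hdvd (Nat.div_pos hp.two_le two_pos).ne'
    rw [Nat.mod_eq_zero_of_dvd hpow] at hlt
    lia
  rw [ZMod.euler_criterion p ha]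
  intro hone
  have hcast : ((a ^ (p / 2) : ℕ) : ZMod p) = (1 : ℕ) := by exact_mod_cast hone
  rw [(ZMod.natCast_eq_natCast_iff' _ _ _).1 hcast, Nat.mod_eq_of_lt hp.one_lt] at hlt
  exact lt_irrefl 1 hlt

theorem pow_sub_two_eq_inv (hp : p ≠ 2) (x : ZMod p) : x ^ (p - 2) = x⁻¹ := by
  have hp2 : 2 < p := lt_of_le_of_ne (Fact.out : p.Prime).two_le hp.symm
  rcases eq_or_ne x 0 with rfl | hx
  · rw [zero_pow (by lia), inv_zero]
  · apply eq_inv_of_mul_eq_one_left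
    rw [← pow_succ, show p - 2 + 1 = p - 1 by lia, ZMod.pow_card_sub_one_eq_one hx]

theorem cast_ratioStepMod (hp : p ≠ 2) (q y : ℕ) :
    (ratioStepMod p q y : ZMod p) = ratioStep (q : ZMod p) y := by
  simp [ratioStepMod, mulAddInvMod, ratioStep, pow_sub_two_eq_inv hp]

theorem not_isSquare_evenNum_of_certifies (hp : p ≠ 2) {q : ℕ} (h : certifies p q = true) (m : ℕ) :
    ¬ IsSquare (evenNum (q : ZMod p) (m + 1)) := by
  refine not_isSquare_evenNum_of_ratioStep (fun i => ?_) m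
  have hsemi : Function.Semiconj (Nat.cast : ℕ → ZMod p) (ratioStepMod p q) (ratioStep q) :=
    cast_ratioStepMod hp q
  have hnonres := not_isSquare_of_isNonresidue (forall_iterate_of_orbitAll h i)
  push_cast at hnonres
  rwa [hsemi.iterate_right i _, hsemi 2, Nat.cast_ofNat] at hnonres

end Modular

section Sieve

/-- The number whose binary expansion is `t` copies of the `p`-bit word `w`. -/
def repeatBits (p t w : ℕ) : ℕ := w * ((2 ^ (p * t) - 1) / (2 ^ p - 1))

/-- A bit mask whose bit `j` is set, for `j ≤ N`, when `P p (j % p)` holds for some `p` in the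
list. -/
def residueSieve (P : ℕ → ℕ → Bool) (N : ℕ) : List ℕ → ℕ
  | [] => 0
  | p :: ps => repeatBits p (N / p + 1) (Nat.ofBits fun a : Fin p => P p a) ||| residueSieve P N ps

theorem testBit_of_testBit_mul_geomSum {p t w j : ℕ} (hw : w < 2 ^ p)
    (h : (w * ∑ i ∈ Finset.range t, (2 ^ p) ^ i).testBit j = true) : w.testBit (j % p) = true := by
  induction t generalizing j with
  | zero => simp at h
  | succ t ih =>
    have hsplit : w * ∑ i ∈ Finset.range (t + 1), (2 ^ p) ^ i =
        2 ^ p * (w * ∑ i ∈ Finset.range t, (2 ^ p) ^ i) + w := by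
      rw [geom_sum_succ]
      ring
    rw [hsplit, Nat.testBit_two_pow_mul_add _ hw] at h
    split_ifs at h with hj
    · rwa [Nat.mod_eq_of_lt hj]
    · rw [Nat.mod_eq_sub_mod (not_lt.1 hj)]
      exact ih h

theorem testBit_of_testBit_repeatBits {p t w j : ℕ} (hw : w < 2 ^ p)
    (h : (repeatBits p t w).testBit j = true) : w.testBit (j % p) = true := by
  rcases Nat.eq_zero_or_pos p with rfl | hp
  · simp [repeatBits] at h
  · apply testBit_of_testBit_mul_geomSum (t := t) hw
    rwa [Nat.geomSum_eq (Nat.le_self_pow hp.ne' 2), ← pow_mul]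

theorem exists_mem_of_testBit_residueSieve {P : ℕ → ℕ → Bool} {N j : ℕ} {ps : List ℕ}
    (h : (residueSieve P N ps).testBit j = true) : ∃ p ∈ ps, P p (j % p) = true := by
  induction ps with
  | nil => simp [residueSieve] at h
  | cons p ps ih =>
    rw [residueSieve, Nat.testBit_or, Bool.or_eq_true] at h
    rcases h with hp | hps
    · have hbit := testBit_of_testBit_repeatBits (Nat.ofBits_lt_two_pow _) hp
      rw [Nat.testBit_ofBits] at hbit
      exact ⟨p, by simp, by simp_all⟩
    · obtain ⟨p', hp', hP⟩ := ih hps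
      exact ⟨p', List.mem_cons_of_mem _ hp', hP⟩

theorem testBit_of_mod_two_pow_eq {x n j : ℕ} (h : x % 2 ^ n = 2 ^ n - 1) (hj : j < n) :
    x.testBit j = true := by
  have hbit : (x % 2 ^ n).testBit j = true := by
    rw [h, Nat.testBit_two_pow_sub_one]
    exact decide_eq_true hj
  rw [Nat.testBit_mod_two_pow, Bool.and_eq_true] at hbit
  exact hbit.2

theorem exists_mem_of_residueSieve_full {P : ℕ → ℕ → Bool} {N : ℕ} {ps : List ℕ}
    (h : (1 ||| residueSieve P N ps) % 2 ^ (N + 1) = 2 ^ (N + 1) - 1)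
    {j : ℕ} (hj₀ : j ≠ 0) (hj : j ≤ N) : ∃ p ∈ ps, P p (j % p) = true := by
  apply exists_mem_of_testBit_residueSieve (N := N)
  have hbit := testBit_of_mod_two_pow_eq h (Nat.lt_succ_of_le hj)
  simpa [Nat.testBit_or, Nat.testBit_one_eq_true_iff_self_eq_zero, hj₀] using hbit

/-- Odd primes that together rule out every `0 < k ≤ 10 ^ 6`, found by adding the odd primes in
increasing order and keeping those that rule out a new `k`. -/
def sievePrimes : List ℕ :=
  [3, 5, 7, 11, 13, 17, 19, 23, 29, 31, 37, 41, 43, 47, 53, 59, 61, 67, 71, 73, 79, 83, 89, 97, 101,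
    103, 107, 109, 113, 127, 131, 137, 139, 149, 151, 157, 163, 167, 173, 179, 181, 191, 193, 197,
    199, 211, 223, 227, 229, 239, 251, 269, 271, 277, 281, 283, 307, 331, 337, 347, 349, 359, 367,
    373, 383, 397, 439, 449, 491, 509, 743]

theorem prime_and_ne_two_of_mem_sievePrimes : ∀ p ∈ sievePrimes, p.Prime ∧ p ≠ 2 := by
  norm_num [sievePrimes]

theorem residueSieve_sievePrimes :
    (1 ||| residueSieve (fun p a => certifies p (a ^ 2)) (10 ^ 6) sievePrimes) % 2 ^ (10 ^ 6 + 1) =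
      2 ^ (10 ^ 6 + 1) - 1 := by
  decide +kernel

end Sieve

theorem not_isSquare_evenNum_succ {k : ℤ} (hk : k ≠ 0) (hk' : |k| ≤ 10 ^ 6) (m : ℕ) :
    ¬ IsSquare (evenNum (k ^ 2) (m + 1)) := by
  obtain ⟨p, hp, hcert⟩ := exists_mem_of_residueSieve_full residueSieve_sievePrimes
    (Int.natAbs_ne_zero.2 hk) (by rw [Int.abs_eq_natAbs] at hk'; lia)
  obtain ⟨hprime, hp2⟩ := prime_and_ne_two_of_mem_sievePrimes p hp
  have : Fact p.Prime := ⟨hprime⟩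
  have hcast : (((k.natAbs % p) ^ 2 : ℕ) : ZMod p) = Int.castRingHom (ZMod p) (k ^ 2) := by
    rw [← Int.natAbs_sq, Nat.cast_pow, ZMod.natCast_mod, map_pow, map_natCast]
  intro hsq
  apply not_isSquare_evenNum_of_certifies hp2 hcert m
  rw [hcast, ← map_evenNum]
  exact hsq.map _

namespace IsDeltaEpsilon

variable {k : ℤ} {D E : ℕ → ℤ}

theorem not_isSquare_odd (h : IsDeltaEpsilon k D E) (hk : k ≠ 0) (m : ℕ) :
    ¬ IsSquare (D (2 * m + 1)) := by
  obtain ⟨u, hD, -⟩ := h.exists_odd_eq hk m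
  rw [hD]
  exact mt (isSquare_of_isSquare_sq_mul (pow_ne_zero _ hk)) (not_isSquare_oddNum k m)

theorem not_isSquare_even (h : IsDeltaEpsilon k D E) (hk : k ≠ 0) (hk' : |k| ≤ 10 ^ 6) (m : ℕ) :
    ¬ IsSquare (D (2 * m + 2)) := by
  obtain ⟨u, hD, hE⟩ := h.exists_odd_eq hk m
  rw [(h.even_eq_of_odd_eq hk hD hE).1]
  refine mt (isSquare_of_isSquare_sq_mul (pow_ne_zero _ hk)) ?_
  cases m with
  | zero => exact not_isSquare_evenNum_zero hk
  | succ m => exact not_isSquare_evenNum_succ hk hk' m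

end IsDeltaEpsilon

end DeltaEpsilon

/-- for the sequences `δ_n, ε_n ∈ ℤ[k]` given by `δ_1 = 2k²`, `ε_1 = k`,
`δ_n = δ_{n−1}² + ε_{n−1}²` and `k·ε_n = δ_{n−1}·ε_{n−1}` (for `n ≥ 2`): for every integer
`k₀` with `1 ≤ |k₀| ≤ 10^6` and every `n ≥ 1`, the integer `δ_n(k₀)` is not a square in `ℤ`. -/
theorem stmt_18 (δ ε : ℕ → Polynomial ℤ)
    (hδ1 : δ 1 = Polynomial.C 2 * Polynomial.X ^ 2)
    (hε1 : ε 1 = Polynomial.X)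
    (hδ : ∀ n, 2 ≤ n → δ n = (δ (n - 1)) ^ 2 + (ε (n - 1)) ^ 2)
    (hε : ∀ n, 2 ≤ n → Polynomial.X * ε n = δ (n - 1) * ε (n - 1))
    (k₀ : ℤ) (h1 : 1 ≤ |k₀|) (h2 : |k₀| ≤ 10 ^ 6) :
    ∀ n, 1 ≤ n → ¬ ∃ a : ℤ, (δ n).eval k₀ = a ^ 2 := by
  have hrec : DeltaEpsilon.IsDeltaEpsilon k₀ (fun n => (δ n).eval k₀) (fun n => (ε n).eval k₀) :=
    { delta_one := by simp [hδ1]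
      epsilon_one := by simp [hε1]
      delta_succ := fun n hn => by simp [hδ (n + 1) (by lia)]
      mul_epsilon_succ := fun n hn => by
        simpa using congrArg (Polynomial.eval k₀) (hε (n + 1) (by lia)) }
  have hk : k₀ ≠ 0 := abs_pos.1 h1
  intro n hn
  rw [← isSquare_iff_exists_sq]
  obtain ⟨m, rfl | rfl⟩ : ∃ m, n = 2 * m + 1 ∨ n = 2 * m + 2 := ⟨(n - 1) / 2, by lia⟩
  · exact hrec.not_isSquare_odd hk m
  · exact hrec.not_isSquare_even hk h2 m
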